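/- If a real α has a d.c.e. approximation that is ρ-speedable for some rational ρ ∈ [0,1), then α has a d.c.e. approximation that is 0-speedable; in fact α has a d.c.e. approximation that is 0-speedable via the function s ↦ s+1. -/

import Mathlib

open Filter

/-- A computable approximation of a real `α`: a computable sequence of
rationals in `[0,1]` converging to `α`. -/
def IsCompApprox (a : ℕ → ℚ) (α : ℝ) : Prop :=
  Computable a ∧ (∀ s, a s ∈ Set.Icc (0 : ℚ) 1) ∧
    Tendsto (fun s => (a s : ℝ)) atTop (nhds α)

/-- A d.c.e. approximation: a computable approximation with bounded variation. -/
def IsDCEApprox (a : ℕ → ℚ) (α : ℝ) : Prop :=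
  IsCompApprox a α ∧ Summable (fun s => |(a (s + 1) : ℝ) - (a s : ℝ)|)

/-- A computable order: a nondecreasing unbounded computable function. -/
def IsComputableOrder (f : ℕ → ℕ) : Prop :=
  Computable f ∧ Monotone f ∧ Tendsto f atTop atTop

/-- The liminf (in the extended reals) of `|(α - a (f s)) / (α - a s)|`. -/
noncomputable def speedLiminf (a : ℕ → ℚ) (f : ℕ → ℕ) (α : ℝ) : EReal :=
  Filter.liminf (fun s => ((|(α - (a (f s) : ℝ)) / (α - (a s : ℝ))| : ℝ) : EReal)) atTop

/-- A computable approximation `a` of `α` is `ρ`-speedable. -/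
def IsRhoSpeedable (a : ℕ → ℚ) (α : ℝ) (ρ : ℚ) : Prop :=
  (∃ q : ℚ, α = (q : ℝ)) ∨
    ∃ f, IsComputableOrder f ∧ speedLiminf a f α ≤ (((ρ : ℝ) : EReal))

/-- A computable approximation is speedable if it is `ρ`-speedable for some rational
`ρ ∈ [0,1)`. -/
def IsSpeedable (a : ℕ → ℚ) (α : ℝ) : Prop :=
  ∃ ρ : ℚ, 0 ≤ ρ ∧ ρ < 1 ∧ IsRhoSpeedable a α ρ

/-- A Solovay test: computable sequences of rationals `l i ≤ r i` in `[0,1]`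
with `Σ (r i - l i) < ∞`. -/
structure SolovayTest where
  l : ℕ → ℚ
  r : ℕ → ℚ
  comp_l : Computable l
  comp_r : Computable r
  mem_l : ∀ i, l i ∈ Set.Icc (0 : ℚ) 1
  mem_r : ∀ i, r i ∈ Set.Icc (0 : ℚ) 1
  le : ∀ i, l i ≤ r i
  summable : Summable (fun i => (r i : ℝ) - (l i : ℝ))

/-- A real `γ` is covered by a Solovay test if `γ ∈ [l i, r i]` for infinitely many `i`. -/
def SolovayTest.Covers (T : SolovayTest) (γ : ℝ) : Prop :=
  ∃ᶠ i in atTop, γ ∈ Set.Icc (T.l i : ℝ) (T.r i : ℝ)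

/-- The sequence of endpoints `l 0, r 0, l 1, r 1, …` of a Solovay test. -/
def SolovayTest.endpoints (T : SolovayTest) (n : ℕ) : ℚ :=
  if n % 2 = 0 then T.l (n / 2) else T.r (n / 2)


section
open Encodable
def rE (q : ℚ) : ℕ := @Encodable.encode ℚ Rat.instEncodable q
def rC (q : ℚ) : ℕ := @Encodable.encode ℚ (Primcodable.toEncodable) q
lemma rE_eq (q : ℚ) : rE q = Nat.pair (encode q.num) q.den := by
  cases q; rfl
lemma encInt_nat (n : ℕ) : encode (n : ℤ) = 2 * n := by
  rfl
lemma encInt_neg (n : ℕ) : encode (Int.negSucc n) = 2 * n + 1 := by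
  rfl
def rR (m : ℕ) : Prop := 0 < m.unpair.2 ∧ Nat.gcd ((m.unpair.1 + 1)/2) m.unpair.2 = 1
instance : DecidablePred rR := fun m => by unfold rR; infer_instance
lemma rE_inj : Function.Injective rE := @Encodable.encode_injective ℚ Rat.instEncodable
lemma natAbs_enc (z : ℤ) : (encode z + 1) / 2 = z.natAbs := by
  rcases z with n | n
  · have := encInt_nat n
    simp only [Int.ofNat_eq_natCast, this, Int.natAbs_natCast]; omega
  · rw [encInt_neg]; simp only [Int.natAbs_negSucc]; omega
lemma rR_iff (m : ℕ) : rR m ↔ m ∈ Set.range rE := by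
  constructor
  · rintro ⟨h1, h2⟩
    have hz : encode (Denumerable.ofNat ℤ m.unpair.1) = m.unpair.1 := Denumerable.encode_ofNat _
    refine ⟨⟨Denumerable.ofNat ℤ m.unpair.1, m.unpair.2, h1.ne', ?_⟩, ?_⟩
    · rw [← natAbs_enc, hz]; exact h2
    · rw [rE_eq]; simp only; rw [hz]; simp
  · rintro ⟨q, rfl⟩
    rw [rE_eq]
    simp only [rR, Nat.unpair_pair, natAbs_enc]
    exact ⟨q.den_pos, q.reduced⟩
lemma rR_set : Set.ofPred rR = Set.range rE := Set.ext rR_iff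
lemma rR_inf : (Set.ofPred rR).Infinite := by
  rw [rR_set]; exact Set.infinite_range_of_injective rE_inj
lemma rE_ofNat (n : ℕ) : rE (Denumerable.ofNat ℚ n) = Nat.nth rR n := by
  let := @decidableRangeEncode ℚ Rat.instEncodable
  let : Infinite (Set.range (@encode ℚ Rat.instEncodable)) :=
    Infinite.of_injective _ (Equiv.ofInjective _ (@encode_injective ℚ Rat.instEncodable)).injective
  have h1 : Denumerable.ofNat ℚ n = (@equivRangeEncode ℚ Rat.instEncodable).symm
      (Nat.Subtype.ofNat (Set.range (@encode ℚ Rat.instEncodable)) n) := by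
    let D := Nat.Subtype.denumerable (Set.range (@encode ℚ Rat.instEncodable))
    have := Denumerable.ofEquiv_ofNat (Set.range (@encode ℚ Rat.instEncodable)) (@equivRangeEncode ℚ Rat.instEncodable) n
    refine this.trans ?_
    rfl
  have h2 : rE (Denumerable.ofNat ℚ n) = (Nat.Subtype.ofNat (Set.range (@encode ℚ Rat.instEncodable)) n : ℕ) := by
    have : rE (Denumerable.ofNat ℚ n) = ((@equivRangeEncode ℚ Rat.instEncodable) (Denumerable.ofNat ℚ n) : ℕ) := rfl
    rw [this, h1, Equiv.apply_symm_apply]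
  rw [Nat.nth_apply_eq_orderIsoOfNat rR_inf, h2, ← Nat.Subtype.orderIsoOfNat_apply]
  have key : ∀ (s t : Set ℕ) (hs : Infinite s) (ht : Infinite t), s = t → 
     ((@Nat.Subtype.orderIsoOfNat s hs n : s) : ℕ) = (@Nat.Subtype.orderIsoOfNat t ht n : t) := by
    rintro s t hs ht rfl; rfl
  exact key _ _ _ _ rR_set.symm
lemma encode_rat (q : ℚ) : rC q = Nat.count rR (rE q) := by
  have h := rE_ofNat (rC q)
  have h2 : Denumerable.ofNat ℚ (rC q) = q := Denumerable.ofNat_encode _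
  rw [h2] at h
  rw [h, Nat.count_nth_of_infinite rR_inf]
lemma gcd_prim : Primrec₂ (fun a b : ℕ => if b = 0 then 0 else Nat.gcd a b) := by
  have h0 : PrimrecRel (fun (p : ℕ × ℕ) (e : ℕ) => p.1 % e = 0 ∧ p.2 % e = 0) := by
    have : PrimrecPred (fun x : (ℕ × ℕ) × ℕ => x.1.1 % x.2 = 0 ∧ x.1.2 % x.2 = 0) := 
      (Primrec.eq.comp (Primrec.nat_mod.comp (Primrec.fst.comp Primrec.fst) Primrec.snd) (Primrec.const 0)).and
       (Primrec.eq.comp (Primrec.nat_mod.comp (Primrec.snd.comp Primrec.fst) Primrec.snd) (Primrec.const 0))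
    exact this
  have h1 := Primrec.nat_findGreatest (Primrec.snd (α := ℕ) (β := ℕ)) h0
  refine (h1.of_eq (g := fun p => if p.2 = 0 then 0 else Nat.gcd p.1 p.2) ?_)
  rintro ⟨a, b⟩
  simp only
  split_ifs with hb
  · subst hb; simp
  · rw [Nat.findGreatest_eq_iff]
    refine ⟨Nat.gcd_le_right _ (Nat.pos_of_ne_zero hb), ?_, ?_⟩
    · intro _
      exact ⟨Nat.mod_eq_zero_of_dvd (Nat.gcd_dvd_left _ _), Nat.mod_eq_zero_of_dvd (Nat.gcd_dvd_right _ _)⟩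
    · rintro n hn _ ⟨h2, h3⟩
      exact absurd (Nat.le_of_dvd (Nat.gcd_pos_of_pos_right _ (Nat.pos_of_ne_zero hb)) (Nat.dvd_gcd (Nat.dvd_of_mod_eq_zero h2) (Nat.dvd_of_mod_eq_zero h3))) (by omega)
lemma rR_prim : PrimrecPred rR := by
  have hu1 : Primrec (fun m : ℕ => m.unpair.1) := Primrec.fst.comp Primrec.unpair
  have hu2 : Primrec (fun m : ℕ => m.unpair.2) := Primrec.snd.comp Primrec.unpair
  have := (Primrec.nat_lt.comp (Primrec.const 0) hu2).and 
    (Primrec.eq.comp (gcd_prim.comp (Primrec.nat_div.comp (Primrec.succ.comp hu1) (Primrec.const 2)) hu2) (Primrec.const 1))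
  refine this.of_eq fun m => ?_
  unfold rR
  constructor
  · rintro ⟨h1, h2⟩
    rw [if_neg h1.ne'] at h2
    exact ⟨h1, h2⟩
  · rintro ⟨h1, h2⟩
    rw [if_neg h1.ne']
    exact ⟨h1, h2⟩
lemma count_prim : Primrec (Nat.count rR) := by
  have h : Primrec₂ (fun (n : ℕ) (c : ℕ) => if rR n then c + 1 else c) := 
    Primrec.ite (rR_prim.comp Primrec.fst) (Primrec.succ.comp Primrec.snd) Primrec.snd
  refine (Primrec.nat_rec₁ 0 h).of_eq fun n => ?_
  induction n with
  | zero => simp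
  | succ n ih => rw [Nat.count_succ, ← ih]; simp only; split_ifs <;> rfl

lemma num_den_frac (N D : ℕ) (h : 0 < D) : ((N : ℚ) / (D : ℚ)).num = ((N / Nat.gcd N D : ℕ) : ℤ) ∧
    ((N : ℚ) / (D : ℚ)).den = D / Nat.gcd N D := by
  have hgp : 0 < Nat.gcd N D := Nat.gcd_pos_of_pos_right _ h
  obtain ⟨g, n, d, hg, hcop, rfl, rfl⟩ := Nat.exists_coprime' hgp
  have hd : 0 < d := Nat.pos_of_mul_pos_right h
  have e : ((n * g : ℕ) : ℚ) / ((d * g : ℕ) : ℚ) = ((n : ℤ) : ℚ) / ((d : ℤ) : ℚ) := by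
    push_cast
    have : (g : ℚ) ≠ 0 := by positivity
    field_simp
  have hgg : Nat.gcd (n * g) (d * g) = g := by rw [Nat.gcd_mul_right, hcop, one_mul]
  rw [e, hgg, Nat.mul_div_cancel _ hg, Nat.mul_div_cancel _ hg]
  have h1 := Rat.num_div_eq_of_coprime (a := (n : ℤ)) (b := (d : ℤ)) (by exact_mod_cast hd) (by simpa using hcop)
  have h2 := Rat.den_div_eq_of_coprime (a := (n : ℤ)) (b := (d : ℤ)) (by exact_mod_cast hd) (by simpa using hcop)
  exact ⟨h1, by exact_mod_cast h2⟩

lemma mk_comp {σ : Type*} [Primcodable σ] {N D : σ → ℕ} (hN : Computable N) (hD : Computable D) (hpos : ∀ s, 0 < D s) :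
   Computable (fun s => (N s : ℚ) / (D s : ℚ)) := by
  rw [← Computable.encode_iff]
  have hg : Computable (fun s => Nat.gcd (N s) (D s)) :=
    (gcd_prim.to_comp.comp hN hD).of_eq fun s => by simp [(hpos s).ne']
  have hdiv := Primrec.nat_div.to_comp
  have := count_prim.to_comp.comp (Primrec₂.natPair.to_comp.comp
     (Primrec.nat_mul.to_comp.comp (Computable.const 2) (hdiv.comp hN hg)) (hdiv.comp hD hg))
  refine this.of_eq fun s => ?_
  have e : @encode ℚ (Primcodable.toEncodable) ((N s : ℚ) / (D s : ℚ)) = Nat.count rR (rE ((N s : ℚ) / (D s : ℚ))) := encode_rat _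
  rw [e, rE_eq]
  have hgp : 0 < Nat.gcd (N s) (D s) := Nat.gcd_pos_of_pos_right _ (hpos s)
  obtain ⟨hnum, hden⟩ := num_den_frac (N s) (D s) (hpos s)
  rw [hnum, hden, encInt_nat]

lemma rE_comp : Computable rE := by
  have hp : Computable₂ (fun (q : ℚ) (m : ℕ) => decide (rR m ∧ Nat.count rR m = rC q)) := by
    have : PrimrecPred (fun (x : ℚ × ℕ) => rR x.2 ∧ Nat.count rR x.2 = rC x.1) := 
      (rR_prim.comp Primrec.snd).and (Primrec.eq.comp (count_prim.comp Primrec.snd) (Primrec.encode.comp Primrec.fst))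
    exact this.decide.to_comp
  refine Partrec.of_eq_tot (Partrec.rfind hp.partrec₂) fun q => ?_
  have hq : rR (rE q) := (rR_iff _).2 ⟨q, rfl⟩
  rw [Nat.mem_rfind]
  constructor
  · simp [hq, encode_rat]
  · intro m hm
    simp only [PFun.coe_val, Part.mem_some_iff]
    symm
    rw [decide_eq_false_iff_not]
    rintro ⟨h1, h2⟩
    rw [encode_rat] at h2
    exact hm.ne (Nat.count_injective h1 hq h2)
lemma num_comp : Computable (fun q : ℚ => q.num.natAbs) := by
  have := Primrec.nat_div.to_comp.comp (Computable.succ.comp (Computable.fst.comp (Computable.unpair.comp rE_comp))) (Computable.const 2)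
  refine this.of_eq fun q => ?_
  rw [rE_eq]; simp only [Nat.unpair_pair]; exact natAbs_enc _
lemma den_comp : Computable (fun q : ℚ => q.den) := by
  refine (Computable.snd.comp (Computable.unpair.comp rE_comp)).of_eq fun q => ?_
  rw [rE_eq]; simp only [Nat.unpair_pair]

lemma abs_rat_eq (x : ℚ) : |x| = (x.num.natAbs : ℚ) / (x.den : ℚ) := by
  conv_lhs => rw [← Rat.num_div_den x]
  rw [abs_div, Nat.cast_natAbs, Int.cast_abs]
  simp
section
variable {σ : Type*} [Primcodable σ]
lemma cadd {f g : σ → ℕ} (hf : Computable f) (hg : Computable g) : Computable (fun s => f s + g s) :=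
  Primrec.nat_add.to_comp.comp hf hg
lemma csub {f g : σ → ℕ} (hf : Computable f) (hg : Computable g) : Computable (fun s => f s - g s) :=
  Primrec.nat_sub.to_comp.comp hf hg
lemma cmul {f g : σ → ℕ} (hf : Computable f) (hg : Computable g) : Computable (fun s => f s * g s) :=
  Primrec.nat_mul.to_comp.comp hf hg
lemma cdiv {f g : σ → ℕ} (hf : Computable f) (hg : Computable g) : Computable (fun s => f s / g s) :=
  Primrec.nat_div.to_comp.comp hf hg
lemma cmax {f g : σ → ℕ} (hf : Computable f) (hg : Computable g) : Computable (fun s => max (f s) (g s)) :=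
  Primrec.nat_max.to_comp.comp hf hg
lemma cpow2 {g : σ → ℕ} (hg : Computable g) : Computable (fun s => 2 ^ g s) :=
  ((Primrec₂.unpaired'.1 Nat.Primrec.pow).to_comp.comp (Computable.const 2) hg)
lemma cle {f g h k : σ → ℕ} (hf : Computable f) (hg : Computable g) (hh : Computable h) (hk : Computable k) :
    Computable (fun s => if f s ≤ g s then h s else k s) :=
  (Computable.cond (Primrec.nat_le.decide.to_comp.comp hf hg) hh hk).of_eq fun s => by
    simp [Bool.cond_decide]
lemma ceq {f g h k : σ → ℕ} (hf : Computable f) (hg : Computable g) (hh : Computable h) (hk : Computable k) :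
    Computable (fun s => if f s = g s then h s else k s) :=
  (Computable.cond ((Primrec.eq (α := ℕ)).decide.to_comp.comp hf hg) hh hk).of_eq fun s => by
    simp [Bool.cond_decide]
lemma csum {f : σ → ℕ} {g : σ → ℕ → ℕ} (hf : Computable f) (hg : Computable₂ g) :
    Computable (fun s => ∑ i ∈ Finset.range (f s), g s i) := by
  have hs : Computable₂ (fun (s : σ) (p : ℕ × ℕ) => p.2 + g s p.1) :=
    cadd (Computable.snd.comp Computable.snd) (hg.comp Computable.fst (Computable.fst.comp Computable.snd))
  refine (Computable.nat_rec hf (Computable.const 0) hs).of_eq fun s => ?_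
  induction f s with
  | zero => simp
  | succ n ih => rw [Finset.sum_range_succ, ← ih]
lemma cradd {f g : σ → ℚ} (hf : Computable f) (hg : Computable g) : Computable (fun s => |f s| + |g s|) := by
  have nf := num_comp.comp hf
  have df := den_comp.comp hf
  have ng := num_comp.comp hg
  have dg := den_comp.comp hg
  refine (mk_comp (cadd (cmul nf dg) (cmul ng df)) (cmul df dg) (fun s => Nat.mul_pos (f s).den_pos (g s).den_pos)).of_eq fun s => ?_
  rw [abs_rat_eq, abs_rat_eq (g s)]
  have h1 := (f s).den_pos
  have h2 := (g s).den_pos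
  push_cast
  field_simp
lemma crsub {f g : σ → ℚ} (hf : Computable f) (hg : Computable g) : Computable (fun s => |(|f s| - |g s|)|) := by
  have nf := num_comp.comp hf
  have df := den_comp.comp hf
  have ng := num_comp.comp hg
  have dg := den_comp.comp hg
  refine (mk_comp (cadd (csub (cmul nf dg) (cmul ng df)) (csub (cmul ng df) (cmul nf dg))) (cmul df dg) (fun s => Nat.mul_pos (f s).den_pos (g s).den_pos)).of_eq fun s => ?_
  rw [abs_rat_eq (f s), abs_rat_eq (g s)]
  have h1 := (f s).den_pos
  have h2 := (g s).den_pos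
  have e : ((f s).num.natAbs : ℚ) / ((f s).den : ℚ) - ((g s).num.natAbs : ℚ) / ((g s).den : ℚ) =
    (((f s).num.natAbs : ℚ) * ((g s).den : ℚ) - ((g s).num.natAbs : ℚ) * ((f s).den : ℚ)) / ((f s).den * (g s).den) := by
    field_simp
  rw [e, abs_div, abs_of_pos (by positivity : (0:ℚ) < ((f s).den * (g s).den))]
  push_cast
  congr 1
  generalize hx : (f s).num.natAbs * (g s).den = x
  generalize hy : (g s).num.natAbs * (f s).den = y
  have hx' : ((f s).num.natAbs : ℚ) * ((g s).den : ℚ) = x := by rw [← hx]; push_cast; rfl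
  have hy' : ((g s).num.natAbs : ℚ) * ((f s).den : ℚ) = y := by rw [← hy]; push_cast; rfl
  rw [hx', hy']
  rcases le_total x y with h | h
  · have : (x : ℚ) ≤ y := by exact_mod_cast h
    rw [Nat.sub_eq_zero_of_le h, abs_of_nonpos (by linarith), Nat.cast_sub h]; simp
  · have : (y : ℚ) ≤ x := by exact_mod_cast h
    rw [Nat.sub_eq_zero_of_le h, abs_of_nonneg (by linarith), Nat.cast_sub h]; simp
lemma crfloor {f : σ → ℚ} {n : σ → ℕ} (hf : Computable f) (hn : Computable n) (h0 : ∀ s, 0 ≤ f s) :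
    Computable (fun s => ⌊(2:ℝ) ^ n s * (f s : ℝ)⌋₊) := by
  refine (cdiv (cmul (num_comp.comp hf) (cpow2 hn)) (den_comp.comp hf)).of_eq fun s => ?_
  have e : (f s : ℝ) = ((f s).num.natAbs : ℝ) / ((f s).den : ℝ) := by
    have := abs_rat_eq (f s)
    rw [abs_of_nonneg (h0 s)] at this
    have h := congrArg (fun x : ℚ => (x : ℝ)) this
    simpa only [Rat.cast_div, Rat.cast_natCast] using h
  rw [e]
  rw [← Nat.floor_div_eq_div (K := ℝ)]
  congr 1
  push_cast
  ring
end
def ww (m : ℕ) : ℕ := if Nat.sqrt m * Nat.sqrt m = m then Nat.sqrt m else 0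
def dd (A L : ℕ → ℕ) (n k : ℕ) : ℕ := if A n ≤ k + L n then (if k ≤ A n + L n then 1 else 0) else 0
def mm (A L : ℕ → ℕ) (n k : ℕ) : ℕ := ∑ i ∈ Finset.range (n + 1), dd A L i (k / 2 ^ (n - i))
def fv (κ : ℕ → ℕ → ℕ) (t n : ℕ) : ℕ :=
  ∑ u ∈ Finset.range t, if n ≤ u then (if κ u n = κ t n then 1 else 0) else 0
def WW (A L : ℕ → ℕ) (n k : ℕ) : ℕ := dd A L n k * ww (mm A L n k)
def DD (κ : ℕ → ℕ → ℕ) (A L : ℕ → ℕ) (t : ℕ) : ℕ :=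
  ∑ n ∈ Finset.range (t + 1), if fv κ t n = 0 then WW A L n (κ t n) * 2 ^ (t - n) else 0

lemma dd_le (A L : ℕ → ℕ) (n k : ℕ) : dd A L n k ≤ 1 := by
  unfold dd; split_ifs <;> simp

lemma ww_sum (m : ℕ) : 2 * ∑ i ∈ Finset.range m, ww (i + 1) = Nat.sqrt m * (Nat.sqrt m + 1) := by
  induction m with
  | zero => simp
  | succ m ih =>
    rw [Finset.sum_range_succ, mul_add, ih]
    unfold ww
    have h1 := Nat.sqrt_le m
    have h2 := Nat.sqrt_lt_self (n := m)
    have h3 := Nat.lt_succ_sqrt m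
    have h4 := Nat.sqrt_le (m+1)
    have h5 := Nat.lt_succ_sqrt (m+1)
    have h6 : Nat.sqrt m ≤ Nat.sqrt (m+1) := Nat.sqrt_le_sqrt (by omega)
    generalize Nat.sqrt m = a at *
    generalize Nat.sqrt (m+1) = b at *
    simp only [Nat.succ_eq_add_one] at *
    split_ifs with h
    · have : b = a + 1 := by
        apply le_antisymm
        · by_contra hc
          have : a + 2 ≤ b := by omega
          nlinarith
        · by_contra hc
          have : a = b := by omega
          subst this; omega
      subst this; ring
    · have : a = b := by
        by_contra hc
        have : a + 1 ≤ b := by omega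
        have h7 : (a+1)*(a+1) ≤ b * b := Nat.mul_le_mul this this
        omega
      subst this; ring

lemma ww_sum_le (m : ℕ) : ∑ i ∈ Finset.range m, ww (i + 1) ≤ m := by
  have h1 := ww_sum m
  have h2 := Nat.sqrt_le m
  nlinarith [Nat.zero_le (Nat.sqrt m), Nat.le_mul_self (Nat.sqrt m)]

lemma ew_sum (e : ℕ → ℕ) (he : ∀ n, e n ≤ 1) (N : ℕ) :
    ∑ n ∈ Finset.range N, e n * ww (∑ i ∈ Finset.range (n + 1), e i) ≤ ∑ n ∈ Finset.range N, e n := by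
  refine le_trans (le_of_eq ?_) (ww_sum_le _)
  induction N with
  | zero => simp
  | succ N ih =>
    rw [Finset.sum_range_succ, ih, Finset.sum_range_succ e]
    rcases Nat.le_one_iff_eq_zero_or_eq_one.1 (he N) with h | h
    · simp [h]
    · rw [h, Finset.sum_range_succ, one_mul]

lemma sum_div (g : ℕ → ℕ) (c M : ℕ) (hc : 0 < c) :
    ∑ K ∈ Finset.range (M * c), g (K / c) = c * ∑ k ∈ Finset.range M, g k := by
  induction M with
  | zero => simp
  | succ M ih =>
    rw [Nat.succ_mul, Finset.sum_range_add, ih, Finset.sum_range_succ, mul_add]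
    congr 1
    rw [Finset.sum_congr rfl (g := fun _ => g M)]
    · simp
    · intro x hx
      rw [Finset.mem_range] at hx
      congr 1
      rw [mul_comm, Nat.mul_add_div hc, Nat.div_eq_of_lt hx, add_zero]

lemma grid_sum (G : ℕ → ℕ → ℕ) (T : ℕ) :
    ∑ n ∈ Finset.range (T + 1), 2 ^ (T - n) * ∑ k ∈ Finset.range (2 ^ (n + 1)), G n k =
      ∑ K ∈ Finset.range (2 ^ (T + 1)), ∑ n ∈ Finset.range (T + 1), G n (K / 2 ^ (T - n)) := by
  rw [Finset.sum_comm]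
  refine Finset.sum_congr rfl fun n hn => ?_
  rw [Finset.mem_range] at hn
  rw [← sum_div _ _ _ (by positivity), ← pow_add]
  congr 3
  omega

lemma WW_sum (A L : ℕ → ℕ) (T : ℕ) :
    ∑ n ∈ Finset.range (T + 1), 2 ^ (T - n) * ∑ k ∈ Finset.range (2 ^ (n + 1)), WW A L n k ≤
    ∑ n ∈ Finset.range (T + 1), 2 ^ (T - n) * (2 * L n + 1) := by
  calc _ ≤ ∑ n ∈ Finset.range (T + 1), 2 ^ (T - n) * ∑ k ∈ Finset.range (2 ^ (n + 1)), dd A L n k := by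
        rw [grid_sum, grid_sum]
        refine Finset.sum_le_sum fun K _ => ?_
        refine le_trans (le_of_eq ?_) (ew_sum (fun n => dd A L n (K / 2 ^ (T - n))) (fun n => dd_le _ _ _ _) (T+1))
        refine Finset.sum_congr rfl fun n hn => ?_
        rw [Finset.mem_range] at hn
        unfold WW mm
        congr 2
        refine Finset.sum_congr rfl fun i hi => ?_
        rw [Finset.mem_range] at hi
        rw [Nat.div_div_eq_div_mul, ← pow_add]
        congr 3
        omega
    _ ≤ _ := by
        refine Finset.sum_le_sum fun n _ => Nat.mul_le_mul_left _ ?_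
        calc _ ≤ ∑ k ∈ Finset.range (2 ^ (n + 1)), if k ∈ Finset.Icc (A n - L n) (A n + L n) then 1 else 0 := by
              refine Finset.sum_le_sum fun k _ => ?_
              unfold dd
              simp only [Finset.mem_Icc]
              split_ifs <;> omega
          _ = ((Finset.range (2 ^ (n + 1))).filter (fun k => k ∈ Finset.Icc (A n - L n) (A n + L n))).card := by
              rw [Finset.card_filter]
          _ ≤ (Finset.Icc (A n - L n) (A n + L n)).card := 
              Finset.card_le_card fun k hk => (Finset.mem_filter.1 hk).2
          _ ≤ _ := by rw [Nat.card_Icc]; omega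

lemma fv_zero (κ : ℕ → ℕ → ℕ) (t n : ℕ) : fv κ t n = 0 ↔ ∀ u < t, n ≤ u → κ u n ≠ κ t n := by
  unfold fv
  rw [Finset.sum_eq_zero_iff]
  simp only [Finset.mem_range]
  refine forall₂_congr fun u hu => ?_
  split_ifs <;> simp_all

lemma DD_sum (κ : ℕ → ℕ → ℕ) (hκ : ∀ t n, κ t n ≤ 2 ^ n) (A L : ℕ → ℕ) (T : ℕ) :
    ∑ t ∈ Finset.range (T + 1), 2 ^ (T - t) * DD κ A L t ≤
    ∑ n ∈ Finset.range (T + 1), 2 ^ (T - n) * (2 * L n + 1) := by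
  refine le_trans ?_ (WW_sum A L T)
  calc _ = ∑ t ∈ Finset.range (T + 1), ∑ n ∈ Finset.range (t + 1), 2 ^ (T - n) * (if fv κ t n = 0 then WW A L n (κ t n) else 0) := by
        refine Finset.sum_congr rfl fun t ht => ?_
        unfold DD
        rw [Finset.mul_sum]
        refine Finset.sum_congr rfl fun n hn => ?_
        rw [Finset.mem_range] at hn ht
        have : 2 ^ (T - n) = 2 ^ (T - t) * 2 ^ (t - n) := by rw [← pow_add]; congr 1; omega
        rw [this]
        split_ifs
        · ring
        · simp
    _ = ∑ n ∈ Finset.range (T + 1), ∑ t ∈ Finset.Ico n (T + 1), 2 ^ (T - n) * (if fv κ t n = 0 then WW A L n (κ t n) else 0) := by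
        apply Finset.sum_comm'
        intro t n
        simp only [Finset.mem_range, Finset.mem_Ico]
        omega
    _ ≤ _ := by
        refine Finset.sum_le_sum fun n _ => ?_
        rw [← Finset.mul_sum]
        refine Nat.mul_le_mul_left _ ?_
        rw [← Finset.sum_filter]
        have hinj : Set.InjOn (fun t => κ t n) ((Finset.Ico n (T + 1)).filter (fun t => fv κ t n = 0) : Finset ℕ) := by
          intro t ht u hu htu
          simp only [Finset.coe_filter, Finset.mem_Ico, Set.mem_ofPred_eq, fv_zero] at ht hu htu
          rcases lt_trichotomy t u with h | h | h
          · exact absurd htu (hu.2 t h ht.1.1)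
          · exact h
          · exact absurd htu.symm (ht.2 u h hu.1.1)
        rw [← Finset.sum_image (f := fun k => WW A L n k) hinj]
        refine Finset.sum_le_sum_of_subset fun k hk => ?_
        rw [Finset.mem_image] at hk
        obtain ⟨t, _, rfl⟩ := hk
        rw [Finset.mem_range]
        exact lt_of_le_of_lt (hκ t n) (Nat.pow_lt_pow_right (by norm_num) (by omega))

lemma DD_comp {κ : ℕ → ℕ → ℕ} {A L : ℕ → ℕ} (hκ : Computable₂ κ) (hA : Computable A) (hL : Computable L) :
    Computable (DD κ A L) := by
  have hdd : Computable₂ (dd A L) := by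
    have h1 := hA.comp (Computable.fst (α := ℕ) (β := ℕ))
    have h2 := hL.comp (Computable.fst (α := ℕ) (β := ℕ))
    have h3 := Computable.snd (α := ℕ) (β := ℕ)
    exact cle h1 (cadd h3 h2) (cle h3 (cadd h1 h2) (Computable.const 1) (Computable.const 0)) (Computable.const 0)
  have hmm : Computable₂ (mm A L) := by
    refine csum (σ := ℕ × ℕ) (Computable.succ.comp Computable.fst) ?_
    exact (hdd.comp Computable.snd (cdiv (Computable.snd.comp Computable.fst)
      (cpow2 (csub (Computable.fst.comp Computable.fst) Computable.snd))))
  have hww : Computable ww := by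
    have := Primrec.nat_sqrt.to_comp
    exact ceq (cmul this this) Computable.id this (Computable.const 0)
  have hfv : Computable₂ (fv κ) := by
    refine csum (σ := ℕ × ℕ) Computable.fst ?_
    have ht := (Computable.fst.comp (Computable.fst (α := ℕ × ℕ) (β := ℕ)))
    have hn := (Computable.snd.comp (Computable.fst (α := ℕ × ℕ) (β := ℕ)))
    have hu := (Computable.snd (α := ℕ × ℕ) (β := ℕ))
    exact cle hn hu (ceq (hκ.comp hu hn) (hκ.comp ht hn) (Computable.const 1) (Computable.const 0)) (Computable.const 0)
  have hWW : Computable₂ (WW A L) := cmul hdd (hww.comp hmm)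
  refine csum (σ := ℕ) Computable.succ ?_
  have ht := Computable.fst (α := ℕ) (β := ℕ)
  have hn := Computable.snd (α := ℕ) (β := ℕ)
  exact ceq (hfv.comp ht hn) (Computable.const 0) (cmul (hWW.comp hn (hκ.comp ht hn)) (cpow2 (csub ht hn))) (Computable.const 0)

end

open Filter in
lemma core_delta (α : ℝ) (hα : α ∈ Set.Ioo (0 : ℝ) 1) (hirr : ∀ q : ℚ, α ≠ q)
    (b ℓ : ℕ → ℚ) (hb : Computable b) (hb01 : ∀ s, b s ∈ Set.Icc (0 : ℚ) 1)
    (hbt : Tendsto (fun s => (b s : ℝ)) atTop (nhds α))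
    (hl : Computable ℓ) (hl0 : ∀ n, 0 ≤ ℓ n) (hls : Summable (fun n => (ℓ n : ℝ)))
    (hf : ∃ᶠ n in atTop, |α - b n| ≤ ℓ n) :
    ∃ δ : ℕ → ℚ, Computable δ ∧ (∀ t, 0 ≤ δ t) ∧ Summable (fun t => (δ t : ℝ)) ∧
      ∀ M : ℕ, ∃ t, (M : ℝ) * |α - b t| ≤ δ t := by
  set κ : ℕ → ℕ → ℕ := fun t n => ⌊(2:ℝ) ^ n * (b t : ℝ)⌋₊ with hκ
  set A : ℕ → ℕ := fun n => κ n n with hA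
  set L : ℕ → ℕ := fun n => ⌊(2:ℝ) ^ n * (ℓ n : ℝ)⌋₊ + 2 with hL
  have hb0 : ∀ s, (0:ℝ) ≤ b s := fun s => by exact_mod_cast (hb01 s).1
  have hb1 : ∀ s, (b s : ℝ) ≤ 1 := fun s => by exact_mod_cast (hb01 s).2
  have cκ : Computable₂ κ := by
    exact crfloor (σ := ℕ × ℕ) (hb.comp Computable.fst) Computable.snd (fun s => (hb01 _).1)
  have cA : Computable A := cκ.comp Computable.id Computable.id
  have cL : Computable L := cadd (crfloor hl Computable.id hl0) (Computable.const 2)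
  have hκle : ∀ t n, κ t n ≤ 2 ^ n := by
    intro t n
    apply Nat.floor_le_of_le
    push_cast
    have := hb1 t
    have h2 : (0:ℝ) < 2 ^ n := by positivity
    nlinarith
  refine ⟨fun t => (DD κ A L t : ℚ) / ((2 ^ t : ℕ) : ℚ), mk_comp (DD_comp cκ cA cL) (cpow2 Computable.id) (fun s => by positivity), fun t => by positivity, ?_, ?_⟩
  · have hLs : Summable (fun n => ((2 * L n + 1 : ℕ) : ℝ) / 2 ^ n) := by
      have hg : Summable (fun n : ℕ => (5:ℝ) * (1/2) ^ n) := (summable_geometric_of_lt_one (by norm_num) (by norm_num)).mul_left 5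
      refine Summable.of_nonneg_of_le (fun n => by positivity) (fun n => ?_) ((hls.mul_left 2).add hg)
      have h2 : (0:ℝ) < 2 ^ n := by positivity
      have h3 : (⌊(2:ℝ) ^ n * (ℓ n : ℝ)⌋₊ : ℝ) ≤ (2:ℝ) ^ n * (ℓ n : ℝ) := Nat.floor_le (by have := hl0 n; positivity)
      rw [div_le_iff₀ h2, add_mul, mul_assoc 5, ← mul_pow]
      simp only [hL]
      push_cast
      norm_num
      nlinarith
    refine summable_of_sum_range_le (c := ∑' n, ((2 * L n + 1 : ℕ) : ℝ) / 2 ^ n) (fun n => by positivity) (fun N => ?_)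
    have key : ∑ t ∈ Finset.range (N + 1), ((((DD κ A L t : ℚ) / ((2 ^ t : ℕ) : ℚ)) : ℚ) : ℝ) ≤ ∑ n ∈ Finset.range (N + 1), ((2 * L n + 1 : ℕ) : ℝ) / 2 ^ n := by
      have h := DD_sum κ hκle A L N
      have h' : ((∑ t ∈ Finset.range (N + 1), 2 ^ (N - t) * DD κ A L t : ℕ) : ℝ) ≤ ((∑ n ∈ Finset.range (N + 1), 2 ^ (N - n) * (2 * L n + 1) : ℕ) : ℝ) := by exact_mod_cast h
      have conv : ∀ G : ℕ → ℕ, ((∑ t ∈ Finset.range (N + 1), 2 ^ (N - t) * G t : ℕ) : ℝ) = 2 ^ N * ∑ t ∈ Finset.range (N + 1), (G t : ℝ) / 2 ^ t := by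
        intro G
        rw [Finset.mul_sum, Nat.cast_sum]
        refine Finset.sum_congr rfl fun t ht => ?_
        rw [Finset.mem_range] at ht
        have : (2:ℝ) ^ N = 2 ^ (N - t) * 2 ^ t := by rw [← pow_add]; congr 1; omega
        rw [this]
        push_cast
        field_simp
      rw [conv, conv] at h'
      have h2 : (0:ℝ) < 2 ^ N := by positivity
      have h3 := le_of_mul_le_mul_left h' h2
      refine le_trans (le_of_eq ?_) h3
      refine Finset.sum_congr rfl fun t ht => ?_
      push_cast; rfl
    refine le_trans ?_ (key.trans (hLs.sum_le_tsum _ (fun n _ => by positivity)))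
    exact Finset.sum_le_sum_of_subset_of_nonneg (Finset.range_mono (by omega)) (fun t _ _ => by positivity)
  · intro M
    rcases Nat.eq_zero_or_pos M with rfl | hM
    · exact ⟨0, by simp⟩
    set z : ℕ → ℕ := fun n => ⌊(2:ℝ) ^ n * α⌋₊ with hz
    set p : ℕ → Prop := fun n => dd A L n (z n) = 1 with hp
    have hα0 := hα.1
    have hfp : ∃ᶠ n in atTop, p n := by
      refine hf.mono fun n hn => ?_
      have h2 : (0:ℝ) < 2 ^ n := by positivity
      have h3 : (2:ℝ)^n * ℓ n < ⌊(2:ℝ) ^ n * (ℓ n : ℝ)⌋₊ + 1 := Nat.lt_floor_add_one _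
      have h4 := Nat.lt_floor_add_one ((2:ℝ)^n * α)
      have h5 := Nat.lt_floor_add_one ((2:ℝ)^n * b n)
      have h6 := Nat.floor_le (a := (2:ℝ)^n * α) (by positivity)
      have h7 := Nat.floor_le (a := (2:ℝ)^n * b n) (by have := hb0 n; positivity)
      rw [abs_le] at hn
      have h8 : (A n : ℝ) < z n + L n := by
        simp only [hA, hκ, hz, hL]; push_cast
        nlinarith
      have h9 : (z n : ℝ) < A n + L n := by
        simp only [hA, hκ, hz, hL]; push_cast
        nlinarith
      have h8' : A n ≤ z n + L n := by exact_mod_cast h8.le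
      have h9' : z n ≤ A n + L n := by exact_mod_cast h9.le
      simp only [hp, dd, if_pos h8', if_pos h9']
    have hpinf : (Set.ofPred p).Infinite := Nat.frequently_atTop_iff_infinite.1 hfp
    set n := Nat.nth p (M * M - 1) with hn
    have hpn : p n := Nat.nth_mem_of_infinite hpinf _
    have hcount : Nat.count p (n + 1) = M * M := by
      rw [Nat.count_succ, if_pos hpn, hn, Nat.count_nth_of_infinite hpinf]
      have : 0 < M * M := Nat.mul_pos hM hM
      omega
    have hmm : mm A L n (z n) = M * M := by
      rw [← hcount, Nat.count_eq_card_filter_range, Finset.card_filter]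
      unfold mm
      refine Finset.sum_congr rfl fun i hi => ?_
      rw [Finset.mem_range] at hi
      have : z n / 2 ^ (n - i) = z i := by
        simp only [hz]
        have e : (2:ℝ) ^ i * α = 2 ^ n * α / ((2 ^ (n - i) : ℕ) : ℝ) := by
          have : (2:ℝ) ^ n = 2 ^ i * 2 ^ (n - i) := by rw [← pow_add]; congr 1; omega
          rw [this]; push_cast; field_simp
        rw [e, Nat.floor_div_natCast]
      rw [this]
      have := dd_le A L i (z i)
      simp only [hp]
      split_ifs with h
      · exact h
      · omega
    have hww : ww (mm A L n (z n)) = M := by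
      rw [hmm]; unfold ww; rw [Nat.sqrt_eq, if_pos rfl]
    have h2 : (0:ℝ) < 2 ^ n := by positivity
    have hzlt : (z n : ℝ) < 2 ^ n * α := by
      refine lt_of_le_of_ne (Nat.floor_le (by positivity)) fun h => ?_
      apply hirr ((z n : ℚ) / 2 ^ n)
      push_cast
      rw [h]; field_simp
    have hzlt2 : 2 ^ n * α < z n + 1 := Nat.lt_floor_add_one _
    have hev : ∀ᶠ t in atTop, κ t n = z n := by
      have ht : Tendsto (fun t => (2:ℝ) ^ n * b t) atTop (nhds (2 ^ n * α)) := hbt.const_mul _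
      filter_upwards [ht.eventually (Ioo_mem_nhds hzlt hzlt2)] with t ht
      simp only [hκ]
      rw [Nat.floor_eq_iff (by have := hb0 t; positivity)]
      exact ⟨ht.1.le, ht.2⟩
    have hex : ∃ t, n ≤ t ∧ κ t n = z n := by
      obtain ⟨t, h1, h2⟩ := (hev.and (eventually_ge_atTop n)).exists
      exact ⟨t, h2, h1⟩
    classical
    obtain ⟨ht1, ht2⟩ := Nat.find_spec hex
    have ht3 : ∀ u < Nat.find hex, ¬ (n ≤ u ∧ κ u n = z n) := fun u hu => Nat.find_min hex hu
    generalize Nat.find hex = t at ht1 ht2 ht3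
    refine ⟨t, ?_⟩
    have hfv : fv κ t n = 0 := by
      rw [fv_zero]
      intro u hu hnu h
      exact ht3 u hu ⟨hnu, by rw [h, ht2]⟩
    have hDD : M * 2 ^ (t - n) ≤ DD κ A L t := by
      unfold DD
      have := Finset.single_le_sum (f := fun n => if fv κ t n = 0 then WW A L n (κ t n) * 2 ^ (t - n) else 0) (s := Finset.range (t+1)) (fun _ _ => Nat.zero_le _) (Finset.mem_range.2 (Nat.lt_succ_of_le ht1))
      refine le_trans (le_of_eq ?_) this
      simp only [hfv, if_true, ht2, WW, hww]
      have : dd A L n (z n) = 1 := hpn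
      rw [this, one_mul]
    have hdist : |α - b t| ≤ 1 / 2 ^ n := by
      have h5 : (2:ℝ)^n * b t < κ t n + 1 := Nat.lt_floor_add_one _
      have h7 : (κ t n : ℝ) ≤ (2:ℝ)^n * b t := Nat.floor_le (by have := hb0 t; positivity)
      rw [ht2] at h5 h7
      rw [le_div_iff₀ h2, ← abs_of_pos h2, ← abs_mul, abs_le]
      constructor <;> nlinarith
    calc (M : ℝ) * |α - b t| ≤ M * (1 / 2 ^ n) := by gcongr
      _ = (M * 2 ^ (t - n) : ℕ) / 2 ^ t := by
        have : (2:ℝ) ^ t = 2 ^ (t - n) * 2 ^ n := by rw [← pow_add]; congr 1; omega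
        rw [this]; push_cast; field_simp
      _ ≤ (DD κ A L t : ℝ) / 2 ^ t := by gcongr
      _ = _ := by push_cast; rfl

lemma final_step (α : ℝ) (hα : α ∈ Set.Ioo (0 : ℝ) 1) (hirr : ∀ q : ℚ, α ≠ q)
    (b δ : ℕ → ℚ) (hb : IsDCEApprox b α) (hδ : Computable δ) (hδ0 : ∀ t, 0 ≤ δ t)
    (hδs : Summable (fun t => (δ t : ℝ))) (hM : ∀ M : ℕ, ∃ t, (M : ℝ) * |α - b t| ≤ δ t) :
    ∃ c : ℕ → ℚ, IsDCEApprox c α ∧ speedLiminf c (fun s => s + 1) α ≤ (0 : EReal) := by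
  obtain ⟨⟨hbc, hb01, hbt⟩, hbv⟩ := hb
  have hpos : ∀ q : ℚ, 0 < |α - q| := fun q => abs_pos.2 (sub_ne_zero.2 (hirr q))
  have hMf : ∀ M N : ℕ, ∃ t, N ≤ t ∧ (M : ℝ) * |α - b t| ≤ δ t := by
    intro M N
    have hK : ∀ t, ∃ K : ℕ, (δ t : ℝ) < K * |α - b t| := by
      intro t
      obtain ⟨K, hK⟩ := exists_nat_gt ((δ t : ℝ) / |α - b t|)
      exact ⟨K, by rwa [div_lt_iff₀ (hpos _)] at hK⟩
    choose K hK using hK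
    obtain ⟨t, ht⟩ := hM (M + ∑ u ∈ Finset.range N, K u)
    have hp := hpos (b t)
    refine ⟨t, ?_, ?_⟩
    · by_contra hc
      have h1 : K t ≤ ∑ u ∈ Finset.range N, K u := Finset.single_le_sum (fun _ _ => Nat.zero_le _) (Finset.mem_range.2 (by omega))
      have h2 : (K t : ℝ) ≤ ((M + ∑ u ∈ Finset.range N, K u : ℕ) : ℝ) := by exact_mod_cast (by omega)
      have h3 := hK t
      nlinarith
    · refine le_trans ?_ ht
      have h2 : (M : ℝ) ≤ ((M + ∑ u ∈ Finset.range N, K u : ℕ) : ℝ) := by exact_mod_cast (by omega)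
      nlinarith
  have hδt : Tendsto (fun t => (δ t : ℝ)) atTop (nhds 0) := hδs.tendsto_atTop_zero
  have hev : ∀ᶠ t in atTop, (b t : ℝ) + δ t < 1 := by
    have := hbt.add hδt
    rw [add_zero] at this
    exact this.eventually_lt_const hα.2
  obtain ⟨t0, ht0⟩ := eventually_atTop.1 hev
  set c : ℕ → ℚ := fun s => |b (s.div2 + t0)| + |bif s.bodd then 0 else δ (s.div2 + t0)| with hc
  have hce : ∀ t, c (2 * t) = b (t + t0) + δ (t + t0) := by
    intro t
    simp only [hc, Nat.div2_val, Nat.bodd_mul]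
    simp [abs_of_nonneg (hb01 _).1, abs_of_nonneg (hδ0 _)]
  have hco : ∀ t, c (2 * t + 1) = b (t + t0) := by
    intro t
    have h : (2 * t + 1) / 2 = t := by omega
    simp only [hc, Nat.div2_val, Nat.bodd_mul, Nat.bodd_succ, h]
    simp [abs_of_nonneg (hb01 _).1]
  have hsplit : ∀ s : ℕ, ∃ t, s = 2 * t ∨ s = 2 * t + 1 := fun s => ⟨s / 2, by omega⟩
  have hcc : Computable c := by
    have hd : Computable (fun s : ℕ => s.div2 + t0) := cadd Computable.nat_div2 (Computable.const t0)
    exact cradd (hbc.comp hd) (Computable.cond Computable.nat_bodd (Computable.const 0) (hδ.comp hd))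
  have htt : Tendsto (fun s : ℕ => s / 2 + t0) atTop atTop := 
    tendsto_atTop_atTop.2 fun N => ⟨2 * N, fun a ha => by omega⟩
  refine ⟨c, ⟨⟨hcc, ?_, ?_⟩, ?_⟩, ?_⟩
  · intro s
    obtain ⟨t, rfl | rfl⟩ := hsplit s
    · rw [hce]
      have h1 : b (t + t0) + δ (t + t0) < 1 := by exact_mod_cast ht0 (t + t0) (by omega)
      exact ⟨add_nonneg (hb01 _).1 (hδ0 _), h1.le⟩
    · rw [hco]; exact hb01 _
  · have h1 : Tendsto (fun s : ℕ => (b (s / 2 + t0) : ℝ)) atTop (nhds α) := hbt.comp htt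
    have h2 : Tendsto (fun s : ℕ => (b (s / 2 + t0) : ℝ) + δ (s / 2 + t0)) atTop (nhds α) := by
      have := (hbt.add hδt).comp htt
      rwa [add_zero] at this
    refine tendsto_of_tendsto_of_tendsto_of_le_of_le h1 h2 ?_ ?_
    · intro s
      obtain ⟨t, rfl | rfl⟩ := hsplit s
      · have h : (2 * t) / 2 = t := by omega
        simp only [hce, h]; push_cast
        have : (0:ℝ) ≤ δ (t + t0) := by exact_mod_cast hδ0 _
        linarith
      · have h : (2 * t + 1) / 2 = t := by omega
        simp only [hco, h, le_refl]
    · intro s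
      obtain ⟨t, rfl | rfl⟩ := hsplit s
      · have h : (2 * t) / 2 = t := by omega
        simp only [hce, h]; push_cast; rfl
      · have h : (2 * t + 1) / 2 = t := by omega
        simp only [hco, h]
        have : (0:ℝ) ≤ δ (t + t0) := by exact_mod_cast hδ0 _
        linarith
  · have hδs' : Summable (fun t => (δ (t + t0) : ℝ)) := (summable_nat_add_iff (f := fun t => (δ t : ℝ)) t0).2 hδs
    have hδs'' : Summable (fun t => (δ (t + 1 + t0) : ℝ)) := (summable_nat_add_iff (f := fun t => (δ (t + t0) : ℝ)) 1).2 hδs'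
    have hbv' : Summable (fun t => |(b (t + t0 + 1) : ℝ) - b (t + t0)|) := (summable_nat_add_iff (f := fun t => |(b (t + 1) : ℝ) - b t|) t0).2 hbv
    have he : Summable (fun t => |(c (2 * t + 1) : ℝ) - c (2 * t)|) := by
      refine hδs'.congr fun t => ?_
      rw [hce, hco]; push_cast
      have : (0:ℝ) ≤ δ (t + t0) := by exact_mod_cast hδ0 _
      rw [abs_sub_comm, abs_of_nonneg] <;> linarith
    have ho : Summable (fun t => |(c (2 * t + 1 + 1) : ℝ) - c (2 * t + 1)|) := by
      refine Summable.of_nonneg_of_le (fun _ => abs_nonneg _) (fun t => ?_) (hbv'.add hδs'')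
      have h : 2 * t + 1 + 1 = 2 * (t + 1) := by ring
      rw [h, hce, hco]; push_cast
      have : (0:ℝ) ≤ δ (t + 1 + t0) := by exact_mod_cast hδ0 _
      have h3 : t + 1 + t0 = t + t0 + 1 := by ring
      rw [h3] at this ⊢
      have h4 : (b (t + t0 + 1) : ℝ) + δ (t + t0 + 1) - b (t + t0) = (b (t + t0 + 1) - b (t + t0)) + δ (t + t0 + 1) := by ring
      rw [h4]
      refine (abs_add_le _ _).trans ?_
      rw [abs_of_nonneg this]
    exact (HasSum.even_add_odd (f := fun s => |(c (s + 1) : ℝ) - c s|) he.hasSum ho.hasSum).summable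
  · have hK : ∀ K : ℕ, speedLiminf c (fun s => s + 1) α ≤ (((1 / ((K : ℝ) + 1) : ℝ)) : EReal) := by
      intro K
      unfold speedLiminf
      refine Filter.liminf_le_of_frequently_le' ?_
      rw [Filter.frequently_atTop]
      intro N
      obtain ⟨t, ht1, ht2⟩ := hMf (K + 2) (N + t0)
      obtain ⟨u, rfl⟩ : ∃ u, t = u + t0 := ⟨t - t0, by omega⟩
      refine ⟨2 * u, by omega, ?_⟩
      rw [EReal.coe_le_coe_iff, hce, hco, abs_div]
      push_cast at ht2 ⊢
      have hp := hpos (b (u + t0))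
      have h1 : ((K : ℝ) + 1) * |α - b (u + t0)| ≤ |α - (b (u + t0) + δ (u + t0))| := by
        have h3 : δ (u + t0) - |α - b (u + t0)| ≤ |α - (b (u + t0) + δ (u + t0))| := by
          rcases abs_cases (α - b (u + t0)) with h | h <;> rcases abs_cases (α - (b (u + t0) + δ (u + t0))) with h' | h' <;> linarith
        nlinarith
      have h2 : 0 < |α - (b (u + t0) + δ (u + t0))| := lt_of_lt_of_le (by positivity) h1
      rw [div_le_div_iff₀ h2 (by positivity)]
      linarith
    have hlim : Tendsto (fun K : ℕ => (((1 / ((K : ℝ) + 1) : ℝ)) : EReal)) atTop (nhds ((0 : ℝ) : EReal)) :=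
      (continuous_coe_real_ereal.tendsto 0).comp tendsto_one_div_add_atTop_nhds_zero_nat
    exact ge_of_tendsto' hlim hK

lemma crmul {f : ℕ → ℚ} (C : ℕ) (hf : Computable f) : Computable (fun s => (C : ℚ) * |f s|) := by
  refine (mk_comp (cmul (Computable.const C) (num_comp.comp hf)) (den_comp.comp hf) (fun s => (f s).den_pos)).of_eq fun s => ?_
  rw [abs_rat_eq (f s)]
  push_cast
  ring

lemma inv_comp {f : ℕ → ℕ} (hf : Computable f) (hex : ∀ u, ∃ v, u ≤ f v) :
    Computable (fun u => Nat.find (hex u)) := by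
  have hp : Computable₂ (fun (u v : ℕ) => decide (u ≤ f v)) :=
    Primrec.nat_le.decide.to_comp.comp Computable.fst (hf.comp Computable.snd)
  refine Partrec.of_eq_tot (Partrec.rfind hp.partrec₂) fun u => ?_
  rw [Nat.mem_rfind]
  constructor
  · have := Nat.find_spec (hex u)
    simpa using this
  · intro m hm
    have := Nat.find_min (hex u) hm
    simpa using this

lemma blocks (α : ℝ) (a : ℕ → ℚ) (ha : IsDCEApprox a α) (f : ℕ → ℕ) (hf : IsComputableOrder f)
    (C : ℕ) (hg : ∃ᶠ s in atTop, |α - a s| ≤ C * |(a s : ℝ) - a (f s)|) :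
    ∃ b ℓ : ℕ → ℚ, IsDCEApprox b α ∧ Computable ℓ ∧ (∀ n, 0 ≤ ℓ n) ∧ Summable (fun n => (ℓ n : ℝ)) ∧
      ∃ᶠ n in atTop, |α - b n| ≤ ℓ n := by
  obtain ⟨⟨hac, ha01, hat⟩, hav⟩ := ha
  obtain ⟨hfc, hfm, hft⟩ := hf
  have hex : ∀ u, ∃ v, u ≤ f v := fun u => (hft.eventually_ge_atTop u).exists
  set nxt : ℕ → ℕ := fun u => max (max (f u) (u + 1)) (Nat.find (hex u)) with hnxt
  have hnc : Computable nxt := cmax (cmax hfc Computable.succ) (inv_comp hfc hex)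
  set S : ℕ → ℕ := fun n => Nat.rec 0 (fun _ x => nxt x) n with hS
  have hS0 : S 0 = 0 := rfl
  have hSs : ∀ n, S (n + 1) = nxt (S n) := fun n => rfl
  have hSc : Computable S := 
    Computable.nat_rec (f := fun n : ℕ => n) (g := fun _ => 0) (h := fun _ p => nxt p.2) Computable.id (Computable.const 0) (hnc.comp (Computable.snd.comp Computable.snd))
  clear_value S
  have hSm : StrictMono S := strictMono_nat_of_lt_succ fun n => by
    rw [hSs]; simp only [hnxt]; omega
  have hSf : ∀ n, f (S n) ≤ S (n + 1) := fun n => by rw [hSs]; simp only [hnxt]; omega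
  have hSi : ∀ n, S n ≤ f (S (n + 1)) := fun n => 
    (Nat.find_spec (hex (S n))).trans (hfm (by rw [hSs]; simp only [hnxt]; omega))
  set V : ℕ → ℚ := fun n => Nat.rec 0 (fun u x => |x| + |(|(|a (u + 1)| - |a u|)|)|) n with hV
  have hVc : Computable V := by
    refine Computable.nat_rec (f := fun n : ℕ => n) (g := fun _ => (0:ℚ)) (h := fun _ p => |p.2| + |(|(|a (p.1 + 1)| - |a p.1|)|)|) Computable.id (Computable.const 0) ?_
    have h1 : Computable (fun x : ℕ × ℕ × ℚ => x.2.1) := Computable.fst.comp Computable.snd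
    exact cradd (Computable.snd.comp Computable.snd) (crsub (hac.comp (Computable.succ.comp h1)) (hac.comp h1))
  have hVs : ∀ n, V (n + 1) = |V n| + |a (n + 1) - a n| := by
    intro n
    have : V (n + 1) = |V n| + |(|(|a (n + 1)| - |a n|)|)| := rfl
    rw [this, abs_abs, abs_of_nonneg (ha01 _).1, abs_of_nonneg (ha01 n).1]
  have hVz : V 0 = 0 := rfl
  clear_value V
  have hV0 : ∀ n, 0 ≤ V n := by
    intro n
    cases n with
    | zero => exact hVz.ge
    | succ n => rw [hVs]; positivity
  have hVsum : ∀ n, (V n : ℝ) = ∑ u ∈ Finset.range n, |(a (u + 1) : ℝ) - a u| := by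
    intro n
    induction n with
    | zero => simp [hVz]
    | succ n ih => rw [Finset.sum_range_succ, ← ih, hVs, abs_of_nonneg (hV0 n)]; push_cast; rfl
  have hVm : Monotone V := monotone_nat_of_le_succ fun n => by
    rw [hVs, abs_of_nonneg (hV0 n)]; have := abs_nonneg (a (n + 1) - a n); linarith
  have hVmr : ∀ x y, x ≤ y → (V x : ℝ) ≤ V y := fun x y h => by exact_mod_cast hVm h
  have hV0r : ∀ x, (0:ℝ) ≤ V x := fun x => by exact_mod_cast hV0 x
  have hVle : ∀ n, (V n : ℝ) ≤ ∑' u, |(a (u + 1) : ℝ) - a u| := fun n => by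
    rw [hVsum]; exact hav.sum_le_tsum _ (fun _ _ => abs_nonneg _)
  have hdiff : ∀ x y, x ≤ y → |(a y : ℝ) - a x| ≤ V y - V x := by
    intro x y h
    induction y, h using Nat.le_induction with
    | base => simp
    | succ y _ ih =>
      have h1 : (V (y + 1) : ℝ) = V y + |(a (y + 1) : ℝ) - a y| := by
        rw [hVsum (y + 1), hVsum y, Finset.sum_range_succ]
      have := abs_sub_le (a (y + 1) : ℝ) (a y) (a x)
      linarith
  have hdiff2 : ∀ p q x y, p ≤ x → p ≤ y → x ≤ q → y ≤ q → |(a y : ℝ) - a x| ≤ V q - V p := by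
    intro p q x y h1 h2 h3 h4
    rcases le_total x y with h | h
    · have := hdiff x y h; have := hVmr p x h1; have := hVmr y q h4; linarith
    · have := hdiff y x h; have := hVmr p y h2; have := hVmr x q h3; rw [abs_sub_comm]; linarith
  set Bd := ∑' u, |(a (u + 1) : ℝ) - a u| with hBd
  have hlr : ∀ n, ((((C + 1 : ℕ) : ℚ) * |(|(|V (S (n + 2))| - |V (S (n - 1))|)|)| : ℚ) : ℝ) = ((C : ℝ) + 1) * (V (S (n + 2)) - V (S (n - 1))) := by
    intro n
    rw [abs_abs, abs_of_nonneg (hV0 _), abs_of_nonneg (hV0 (S (n - 1))), abs_of_nonneg (sub_nonneg.2 (hVm (hSm.monotone (by omega))))]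
    push_cast; rfl
  refine ⟨fun n => a (S n), fun n => ((C + 1 : ℕ) : ℚ) * |(|(|V (S (n + 2))| - |V (S (n - 1))|)|)|, ⟨⟨hac.comp hSc, fun n => ha01 _, hat.comp hSm.tendsto_atTop⟩, ?_⟩, ?_, fun n => by positivity, ?_, ?_⟩
  · refine summable_of_sum_range_le (c := Bd) (fun _ => abs_nonneg _) fun N => ?_
    refine le_trans ?_ (hVle (S N))
    induction N with
    | zero => simpa using hV0r _
    | succ N ih =>
      rw [Finset.sum_range_succ]
      have := hdiff (S N) (S (N + 1)) (hSm.monotone (by omega))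
      linarith
  · refine crmul _ (crsub (hVc.comp (hSc.comp (cadd Computable.id (Computable.const 2)))) (hVc.comp (hSc.comp (csub Computable.id (Computable.const 1)))))
  · simp only [hlr]
    refine Summable.mul_left _ ?_
    refine summable_of_sum_range_le (c := 3 * Bd) (fun n => sub_nonneg.2 (hVmr _ _ (hSm.monotone (by omega)))) fun N => ?_
    have : ∑ n ∈ Finset.range N, ((V (S (n + 2)) : ℝ) - V (S (n - 1))) ≤ V (S (N + 1)) + V (S N) + V (S (N - 1)) := by
      induction N with
      | zero => simpa using add_nonneg (add_nonneg (hV0r _) (hV0r _)) (hV0r _)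
      | succ N ih =>
        rw [Finset.sum_range_succ]
        simp only [Nat.add_sub_cancel]
        have e : N + 1 + 1 = N + 2 := rfl
        rw [e]
        linarith
    have h1 := hVle (S (N + 1))
    have h2 := hVle (S N)
    have h3 := hVle (S (N - 1))
    linarith
  · rw [Filter.frequently_atTop] at hg ⊢
    intro N
    obtain ⟨s, hs1, hs2⟩ := hg (S N)
    obtain ⟨n, hn1, hn2⟩ : ∃ n, S n ≤ s ∧ s < S (n + 1) := by
      have hex2 : ∃ m, s < S m := ⟨s + 1, lt_of_lt_of_le (Nat.lt_succ_self s) (hSm.le_apply)⟩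
      have h1 := Nat.find_spec hex2
      have h0 : Nat.find hex2 ≠ 0 := fun h => by rw [h, hS0] at h1; omega
      obtain ⟨m, hm⟩ := Nat.exists_eq_succ_of_ne_zero h0
      refine ⟨m, ?_, by rw [hm] at h1; exact h1⟩
      have := Nat.find_min hex2 (m := m) (by omega)
      omega
    refine ⟨n, ?_, ?_⟩
    · have : S N < S (n + 1) := lt_of_le_of_lt hs1 hn2
      have := hSm.lt_iff_lt.1 this
      omega
    · rw [hlr]
      have hlo : S (n - 1) ≤ f s := by
        cases n with
        | zero => simp [hS0]
        | succ n => exact (hSi n).trans (hfm hn1)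
      have hhi : f s ≤ S (n + 2) := (hfm hn2.le).trans (hSf (n + 1))
      have m1 : S (n - 1) ≤ S n := hSm.monotone (by omega)
      have m2 : S (n + 1) ≤ S (n + 2) := hSm.monotone (by omega)
      have m3 : S n ≤ S (n + 1) := hSm.monotone (by omega)
      have d1 := hdiff2 (S (n - 1)) (S (n + 2)) (f s) s hlo (by omega) hhi (by omega)
      have d2 := hdiff2 (S (n - 1)) (S (n + 2)) (S n) s m1 (by omega) (by omega) (by omega)
      have d3 := abs_sub_le α (a s) (a (S n))
      have d4 : (C : ℝ) * |(a s : ℝ) - a (f s)| ≤ C * (V (S (n + 2)) - V (S (n - 1))) := by gcongr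
      simp only
      linarith

theorem dce_speedable_implies_zero_speedable (α : ℝ) (hα : α ∈ Set.Ioo (0 : ℝ) 1)
    (h : ∃ a : ℕ → ℚ, IsDCEApprox a α ∧
      ∃ ρ : ℚ, 0 ≤ ρ ∧ ρ < 1 ∧ IsRhoSpeedable a α ρ) :
    (∃ c : ℕ → ℚ, IsDCEApprox c α ∧ IsRhoSpeedable c α 0) ∧
    (∃ c : ℕ → ℚ, IsDCEApprox c α ∧
      ((∃ q : ℚ, α = (q : ℝ)) ∨
        speedLiminf c (fun s => s + 1) α ≤ (0 : EReal))) := by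
  obtain ⟨a, ha, ρ, hρ0, hρ1, hsp⟩ := h
  by_cases hrat : ∃ q : ℚ, α = (q : ℝ)
  · exact ⟨⟨a, ha, Or.inl hrat⟩, ⟨a, ha, Or.inl hrat⟩⟩
  have hirr : ∀ q : ℚ, α ≠ q := fun q hq => hrat ⟨q, hq⟩
  obtain ⟨f, hf, hlim⟩ := hsp.resolve_left hrat
  have main : ∃ c : ℕ → ℚ, IsDCEApprox c α ∧ speedLiminf c (fun s => s + 1) α ≤ (0 : EReal) := by
    have hρr : (ρ : ℝ) < 1 := by exact_mod_cast hρ1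
    obtain ⟨r, hr1, hr2⟩ := exists_between hρr
    obtain ⟨C, hC⟩ := exists_nat_gt (1 / (1 - r))
    have hfr : ∃ᶠ s in atTop, |α - a s| ≤ C * |(a s : ℝ) - a (f s)| := by
      have hlt : speedLiminf a f α < ((r : ℝ) : EReal) := lt_of_le_of_lt hlim (EReal.coe_lt_coe_iff.2 hr1)
      have := Filter.frequently_lt_of_liminf_lt (by isBoundedDefault) hlt
      refine this.mono fun s hs => ?_
      rw [EReal.coe_lt_coe_iff, abs_div] at hs
      have hp : 0 < |α - a s| := abs_pos.2 (sub_ne_zero.2 (hirr _))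
      rw [div_lt_iff₀ hp] at hs
      have h1 := abs_sub_le α (a (f s)) (a s)
      rw [abs_sub_comm (a (f s) : ℝ)] at h1
      have h2 : 0 < 1 - r := by linarith
      rw [div_lt_iff₀ h2] at hC
      have h3 : (1 - r) * |α - a s| ≤ |(a s : ℝ) - a (f s)| := by linarith
      have h4 : (C : ℝ) * ((1 - r) * |α - a s|) ≤ C * |(a s : ℝ) - a (f s)| := by gcongr
      nlinarith
    obtain ⟨b, ℓ, hb, hl, hl0, hls, hfq⟩ := blocks α a ha f hf C hfr
    obtain ⟨δ, h1, h2, h3, h4⟩ := core_delta α hα hirr b ℓ hb.1.1 hb.1.2.1 hb.1.2.2 hl hl0 hls hfq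
    exact final_step α hα hirr b δ hb h1 h2 h3 h4
  obtain ⟨c, hc, hc0⟩ := main
  refine ⟨⟨c, hc, Or.inr ⟨fun s => s + 1, ⟨Computable.succ, fun x y h => Nat.succ_le_succ h, tendsto_add_atTop_nat 1⟩, ?_⟩⟩, ⟨c, hc, Or.inr hc0⟩⟩
  simpa using hc0
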